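/- arXiv:1605.05630 — 4 statements merged into one kernel-verified Lean document; each statement's English description precedes it below -/
import Mathlib

section
/- There is a compact Hausdorff space X such that the weak Lindelöf number of its G_δ modification X_δ equals 𝔠⁺; in particular wL(X_δ) > 2^{ℵ₀}. -/
open Set Cardinal TopologicalSpace

universe u

/-- The topology generated by the G_δ subsets of a space. -/
abbrev gdeltaModification (X : Type*) [TopologicalSpace X] : TopologicalSpace X :=
  generateFrom {s : Set X | IsGδ s}

theorem isTopologicalBasis_isGδ (X : Type*) [TopologicalSpace X] :
    @IsTopologicalBasis X (gdeltaModification X) {s : Set X | IsGδ s} :=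
  @isTopologicalBasis_of_subbasis_of_finiteInter X (gdeltaModification X) _ rfl
    ⟨IsGδ.univ, fun _ hs _ ht => IsGδ.inter hs ht⟩

theorem dense_gdeltaModification_iff {X : Type*} [TopologicalSpace X] {s : Set X} :
    @Dense X (gdeltaModification X) s ↔ ∀ G : Set X, IsGδ G → G.Nonempty → (G ∩ s).Nonempty :=
  @IsTopologicalBasis.dense_iff X (gdeltaModification X) _ (isTopologicalBasis_isGδ X) s

/-- Membership in a G_δ subset of a subspace of a product is decided by countably many
coordinates. -/
theorem IsGδ.exists_seq_coordinates {ι : Type*} [Nonempty ι] {A : ι → Type*}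
    [∀ i, TopologicalSpace (A i)] {K : Set (∀ i, A i)} {G : Set K} (hG : IsGδ G) {x : K}
    (hx : x ∈ G) :
    ∃ s : ℕ → ι, ∀ y : K, (∀ n, y.1 (s n) = x.1 (s n)) → y ∈ G := by
  obtain ⟨T, hTo, hTc, rfl⟩ := hG
  have key : ∀ t ∈ T, ∃ F : Set ι, F.Countable ∧
      ∀ y : K, (∀ i ∈ F, y.1 i = x.1 i) → y ∈ t := by
    intro t ht
    obtain ⟨V, hV, rfl⟩ := isOpen_induced_iff.1 (hTo t ht)
    obtain ⟨F, w, hw, hF⟩ := isOpen_pi_iff.1 hV x.1 (hx _ ht)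
    refine ⟨F, F.countable_toSet, fun y hy => hF fun i hi => ?_⟩
    rw [hy i hi]
    exact (hw i hi).2
  choose! F hFc hF using key
  obtain ⟨s, hs⟩ := ((hTc.biUnion hFc).union (countable_singleton (Classical.arbitrary ι))
    ).exists_eq_range ⟨_, Or.inr rfl⟩
  refine ⟨s, fun y hy t ht => hF t ht y fun i hi => ?_⟩
  obtain ⟨n, rfl⟩ : i ∈ range s := hs ▸ Or.inl (mem_biUnion ht hi)
  exact hy n

/-- The G_δ modification of a subspace of `ι → A` has a dense set of size at most
`#((ℕ → ι) × (ℕ → A))`. -/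
theorem exists_dense_gdeltaModification {ι A : Type*} [Nonempty ι] [TopologicalSpace A]
    (K : Set (ι → A)) [Nonempty K] :
    ∃ d : (ℕ → ι) × (ℕ → A) → K, @Dense K (gdeltaModification K) (range d) := by
  have h : ∀ p : (ℕ → ι) × (ℕ → A), ∃ x : K, (∃ y : K, ∀ n, y.1 (p.1 n) = p.2 n) →
      ∀ n, x.1 (p.1 n) = p.2 n := by
    intro p
    by_cases hp : ∃ y : K, ∀ n, y.1 (p.1 n) = p.2 n
    · exact ⟨hp.choose, fun _ => hp.choose_spec⟩
    · exact ⟨Classical.arbitrary K, fun h => absurd h hp⟩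
  choose d hd using h
  refine ⟨d, ?_⟩
  rw [dense_gdeltaModification_iff]
  rintro G hG ⟨x, hx⟩
  obtain ⟨s, hs⟩ := IsGδ.exists_seq_coordinates hG hx
  exact ⟨_, hs _ (hd (s, fun n => x.1 (s n)) ⟨x, fun _ => rfl⟩), mem_range_self _⟩

/-- An open cover of a space with a dense set indexed by `ι` has a subfamily of size at most `#ι`
with dense union. -/
theorem exists_subfamily_dense_sUnion {X : Type u} [TopologicalSpace X] {ι : Type u} {d : ι → X}
    (hd : Dense (range d)) {𝒰 : Set (Set X)} (hU : ⋃₀ 𝒰 = Set.univ) :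
    ∃ 𝒱 ⊆ 𝒰, #𝒱 ≤ #ι ∧ Dense (⋃₀ 𝒱) := by
  have h : ∀ i, ∃ u ∈ 𝒰, d i ∈ u := fun i => by
    rw [← mem_sUnion, hU]; trivial
  choose f hf hdf using h
  refine ⟨range f, range_subset_iff.2 hf, mk_range_le, hd.mono ?_⟩
  rintro _ ⟨i, rfl⟩
  exact ⟨f i, mem_range_self i, hdf i⟩

/-- The initial ordinal of `𝔠⁺`, as a well-ordered type. -/
abbrev ContinuumSucc : Type u := (Order.succ continuum : Cardinal.{u}).ord.ToType

namespace ContinuumSucc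

theorem mk_eq : #ContinuumSucc.{u} = Order.succ continuum := by
  simp [mk_toType]

instance : Nonempty ContinuumSucc.{u} := by
  rw [← mk_ne_zero_iff, mk_eq]
  exact (Order.bot_lt_succ _).ne'

theorem mk_Iio_le (a : ContinuumSucc.{u}) : #(Iio a) ≤ continuum :=
  Order.lt_succ_iff.1 ((mk_Iio_lt a (by simp [mk_toType])).trans_eq mk_eq)

theorem exists_forall_lt {s : Set ContinuumSucc.{u}} (hs : #s ≤ continuum) :
    ∃ a, ∀ b ∈ s, b < a := by
  have h : ¬ IsCofinal s := fun h => by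
    have := Order.cof_le h
    rw [Ordinal.cof_toType, (isRegular_succ aleph0_le_continuum).cof_ord] at this
    exact (Order.lt_succ_of_le hs).not_ge this
  simpa [IsCofinal] using h

theorem mk_seq_le : #(ℕ → ContinuumSucc.{u}) ≤ Order.succ continuum := by
  have hcov : (Set.univ : Set (ℕ → ContinuumSucc.{u})) ⊆
      ⋃ a : ContinuumSucc.{u}, range fun (f : ℕ → Iio a) n => (f n : ContinuumSucc.{u}) := by
    intro f _
    obtain ⟨a, ha⟩ := exists_forall_lt (s := range f)
      ((countable_range f).le_aleph0.trans aleph0_le_continuum)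
    exact mem_iUnion.2 ⟨a, fun n => ⟨f n, ha _ (mem_range_self n)⟩, rfl⟩
  have hbd : ∀ a : ContinuumSucc.{u},
      #(range fun (f : ℕ → Iio a) n => (f n : ContinuumSucc.{u})) ≤ continuum := fun a => by
    refine mk_range_le.trans ?_
    rw [mk_pi, prod_const, lift_uzero, mk_nat, lift_aleph0]
    exact (power_le_power_right (mk_Iio_le a)).trans_eq continuum_power_aleph0
  rw [← mk_univ]
  refine (mk_le_mk_of_subset hcov).trans ((mk_iUnion_le _).trans ?_)
  rw [mk_eq]
  refine (mul_le_mul_right (ciSup_le' hbd) _).trans ?_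
  have hle : (continuum : Cardinal.{u}) ≤ Order.succ continuum := Order.le_succ _
  exact mul_le_of_le (aleph0_le_continuum.trans hle) le_rfl hle

end ContinuumSucc

theorem mk_cantor : #(ℕ → Bool) = continuum := by simp

theorem exists_injOn_Iio_cantor (a : ContinuumSucc.{u}) :
    ∃ f : ContinuumSucc.{u} → ℕ → Bool, InjOn f (Iio a) := by
  have h : lift.{0} #(Iio a) ≤ lift.{u} #(ℕ → Bool) := by
    rw [mk_cantor, lift_continuum, lift_uzero]
    exact ContinuumSucc.mk_Iio_le a
  obtain ⟨g⟩ := lift_mk_le'.1 h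
  classical
  refine ⟨fun b => if hb : b < a then g ⟨b, hb⟩ else fun _ => false, fun b hb c hc h => ?_⟩
  simp only [mem_Iio.1 hb, mem_Iio.1 hc, dif_pos] at h
  exact congrArg Subtype.val (g.injective h)

theorem exists_lt_eq_cantor (f : ContinuumSucc.{u} → ℕ → Bool) : ∃ a b, a < b ∧ f a = f b := by
  have h : ¬ Function.Injective f := fun hf => by
    have := lift_mk_le_lift_mk_of_injective hf
    rw [mk_cantor, lift_continuum, lift_uzero, ContinuumSucc.mk_eq] at this
    exact (Order.lt_succ _).not_ge this
  obtain ⟨a, b, hab, hne⟩ := Function.not_injective_iff.1 h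
  rcases hne.lt_or_gt with h | h
  exacts [⟨a, b, h, hab⟩, ⟨b, a, h, hab.symm⟩]

/-- Families in which the flag at `a` forces the points below `a` to be the values of `e a`. -/
def flaggedFamilies {I C : Type*} [LT I] (e : I → I → C) : Set (I → C × Bool) :=
  {x | ∀ a, (x a).2 = true → ∀ b < a, (x b).1 = e a b}

theorem isClosed_flaggedFamilies {I C : Type*} [LT I] [TopologicalSpace C] [T2Space C]
    (e : I → I → C) : IsClosed (flaggedFamilies e) := by
  simp only [flaggedFamilies, ofPred_forall]
  refine isClosed_iInter fun a => ?_
  have hopen : IsOpen {x : I → C × Bool | (x a).2 = true} :=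
    (isOpen_discrete {true}).preimage (by fun_prop : Continuous fun x : I → C × Bool => (x a).2)
  refine isClosed_imp hopen ?_
  simp only [ofPred_forall]
  exact isClosed_iInter fun b => isClosed_iInter fun _ =>
    isClosed_eq (by fun_prop) continuous_const

theorem exists_mem_flaggedFamilies {I C : Type*} [LT I] (e : I → I → C) (a : I) :
    ∃ x ∈ flaggedFamilies e, (x a).2 = true := by
  classical
  refine ⟨fun b => (e a b, decide (b = a)), fun c hc b _ => ?_, by simp⟩
  obtain rfl : c = a := by simpa using hc
  rfl

theorem isGδ_setOf_cantor_eq {X : Type*} [TopologicalSpace X] {f g : X → ℕ → Bool}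
    (hf : Continuous f) (hg : Continuous g) : IsGδ {x | f x = g x} := by
  simp only [funext_iff, ofPred_forall]
  refine IsGδ.iInter_of_isOpen fun n => ?_
  exact (isOpen_discrete {p : Bool × Bool | p.1 = p.2}).preimage
    (((continuous_apply n).comp hf).prodMk ((continuous_apply n).comp hg))

theorem exists_compact_wL_gdelta_continuum_succ :
    ∃ (X : Type u) (tX : TopologicalSpace X), @CompactSpace X tX ∧ @T2Space X tX ∧
      (∀ 𝒰 : Set (Set X),
        (∀ u ∈ 𝒰, @IsOpen X (TopologicalSpace.generateFrom {s : Set X | @IsGδ X tX s}) u) →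
        ⋃₀ 𝒰 = Set.univ →
        ∃ 𝒱 ⊆ 𝒰, #𝒱 ≤ Order.succ continuum ∧
          @Dense X (TopologicalSpace.generateFrom {s : Set X | @IsGδ X tX s}) (⋃₀ 𝒱)) ∧
      (∃ 𝒰 : Set (Set X),
        (∀ u ∈ 𝒰, @IsOpen X (TopologicalSpace.generateFrom {s : Set X | @IsGδ X tX s}) u) ∧
        ⋃₀ 𝒰 = Set.univ ∧
        ∀ 𝒱 ⊆ 𝒰, #𝒱 ≤ continuum →
          ¬ @Dense X (TopologicalSpace.generateFrom {s : Set X | @IsGδ X tX s}) (⋃₀ 𝒱)) := by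
  choose e he using exists_injOn_Iio_cantor.{u}
  let K := flaggedFamilies e
  have hK : IsClosed K := isClosed_flaggedFamilies e
  have hne : ∀ a, ∃ x : K, (x.1 a).2 = true := fun a =>
    let ⟨x, hx, hxa⟩ := exists_mem_flaggedFamilies e a
    ⟨⟨x, hx⟩, hxa⟩
  have hcoord : ∀ a, Continuous fun x : K => x.1 a := fun a =>
    (continuous_apply a).comp continuous_subtype_val
  have : Nonempty K := ⟨(hne (Classical.arbitrary _)).choose⟩
  refine ⟨K, inferInstance, isCompact_iff_compactSpace.1 hK.isCompact, inferInstance, ?_, ?_⟩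
  · intro 𝒰 _ hU
    obtain ⟨d, hd⟩ := exists_dense_gdeltaModification K
    obtain ⟨𝒱, hV, hcard, hdense⟩ :=
      @exists_subfamily_dense_sUnion K (gdeltaModification K) _ d hd 𝒰 hU
    refine ⟨𝒱, hV, hcard.trans ?_, hdense⟩
    have hle : (continuum : Cardinal.{u}) ≤ Order.succ continuum := Order.le_succ _
    rw [mk_prod]
    refine mul_le_of_le (aleph0_le_continuum.trans hle)
      (by simpa using ContinuumSucc.mk_seq_le) (le_trans (le_of_eq ?_) hle)
    simp
  · let U : ContinuumSucc.{u} × ContinuumSucc.{u} → Set K := fun p =>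
      {x | (x.1 p.1).1 = (x.1 p.2).1}
    refine ⟨U '' {p | p.1 < p.2}, ?_, ?_, ?_⟩
    · rintro _ ⟨p, -, rfl⟩
      exact isOpen_generateFrom_of_mem (isGδ_setOf_cantor_eq
        (continuous_fst.comp (hcoord _)) (continuous_fst.comp (hcoord _)))
    · refine eq_univ_of_forall fun x => ?_
      obtain ⟨a, b, hab, h⟩ := exists_lt_eq_cantor fun a => (x.1 a).1
      exact ⟨_, ⟨(a, b), hab, rfl⟩, h⟩
    · intro 𝒱 hV hcard hdense
      have hV' : ∀ v : 𝒱, ∃ p : ContinuumSucc.{u} × ContinuumSucc.{u}, p.1 < p.2 ∧ U p = v :=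
        fun v => hV v.2
      choose p hp hpU using hV'
      obtain ⟨a, ha⟩ := ContinuumSucc.exists_forall_lt (s := range fun v => (p v).2)
        (mk_range_le.trans hcard)
      have hGδ : IsGδ {x : K | (x.1 a).2 = true} := IsOpen.isGδ <|
        (isOpen_discrete {true}).preimage (continuous_snd.comp (hcoord a))
      obtain ⟨x, hx, v, hv, hxv⟩ :=
        dense_gdeltaModification_iff.1 hdense _ hGδ (hne a)
      have h2 : (p ⟨v, hv⟩).2 < a := ha _ (mem_range_self _)
      have h1 : (p ⟨v, hv⟩).1 < a := (hp _).trans h2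
      have hxp : x ∈ U (p ⟨v, hv⟩) := (hpU ⟨v, hv⟩).symm ▸ hxv
      have heq : e a (p ⟨v, hv⟩).1 = e a (p ⟨v, hv⟩).2 := by
        rw [← x.2 a hx _ h1, ← x.2 a hx _ h2]
        exact hxp
      exact (hp ⟨v, hv⟩).ne (he a h1 h2 heq)
end

section
/- Let X be an initially κ-compact Hausdorff space with tightness t(X) ≤ κ and wL_c(X) ≤ κ. Then the weak Lindelöf number of the topology generated by the G^c_κ subsets of X is at most 2^κ; that is, every cover of X by G^c_κ sets has a subfamily of size at most 2^κ whose union is dense in that topology. -/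
open Set Cardinal TopologicalSpace

universe u

/-- `X` is initially `κ`-compact: every open cover of size at most `κ` has a finite
subcover. -/
def InitiallyCompact (κ : Cardinal.{u}) (X : Type u) [TopologicalSpace X] : Prop :=
  ∀ 𝒰 : Set (Set X), (∀ u ∈ 𝒰, IsOpen u) → ⋃₀ 𝒰 = Set.univ → #𝒰 ≤ κ →
    ∃ 𝒱 ⊆ 𝒰, 𝒱.Finite ∧ ⋃₀ 𝒱 = Set.univ

/-- The tightness of `X` is at most `κ`. -/
def TightnessLE (X : Type u) [TopologicalSpace X] (κ : Cardinal.{u}) : Prop :=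
  ∀ (A : Set X) (x : X), x ∈ closure A → ∃ B ⊆ A, #B ≤ κ ∧ x ∈ closure B

/-- `wL_c(X) ≤ κ`: every open cover of any closed set `F` has a subfamily of size at most
`κ` whose union has closure containing `F`. -/
def WLcLE (X : Type u) [TopologicalSpace X] (κ : Cardinal.{u}) : Prop :=
  ∀ F : Set X, IsClosed F → ∀ 𝒰 : Set (Set X), (∀ u ∈ 𝒰, IsOpen u) → F ⊆ ⋃₀ 𝒰 →
    ∃ 𝒱 ⊆ 𝒰, #𝒱 ≤ κ ∧ F ⊆ closure (⋃₀ 𝒱)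

/-- `G` is a `G^c_κ` set: an intersection of at most `κ` open sets which also equals the
intersection of their closures. -/
def IsGcKappa (κ : Cardinal.{u}) {X : Type u} [TopologicalSpace X] (G : Set X) : Prop :=
  ∃ (ι : Type u) (U : ι → Set X), #ι ≤ κ ∧ (∀ i, IsOpen (U i)) ∧
    G = ⋂ i, U i ∧ G = ⋂ i, closure (U i)

theorem exists_surjective_of_mk_le {ι K : Type u} [Nonempty ι] (h : #ι ≤ #K) :
    ∃ e : K → ι, Function.Surjective e := by
  obtain ⟨e⟩ := h
  exact ⟨Function.invFun e, Function.invFun_surjective e.injective⟩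

/-- A family of `2 ^ κ` many `κ`-ary operations admits a nonempty closed set of size at most
`2 ^ κ`. -/
theorem exists_nonempty_closed_under {κ : Cardinal.{u}} (hκ : ℵ₀ ≤ κ) {X T J : Type u}
    (hT : #T ≤ 2 ^ κ) (hJ : #J ≤ κ) (x₀ : X) (F : T → (J → X) → X) :
    ∃ A : Set X, A.Nonempty ∧ #A ≤ 2 ^ κ ∧
      ∀ (t : T) (g : J → X), (∀ j, g j ∈ A) → F t g ∈ A := by
  have hinf : ℵ₀ ≤ (2 : Cardinal.{u}) ^ κ := hκ.trans (cantor κ).le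
  let β : Option T → Type u := fun o => o.elim PEmpty fun _ => J
  let step : (Σ o : Option T, β o → X) → X := fun p =>
    match p with
    | ⟨none, _⟩ => x₀
    | ⟨some t, g⟩ => F t g
  let eval : WType β → X := WType.elim X step
  have hpow : ∀ o, ((2 : Cardinal.{u}) ^ κ) ^ #(β o) ≤ 2 ^ κ := by
    rintro (_ | t)
    · simpa [β] using one_le_aleph0.trans hinf
    · calc ((2 : Cardinal.{u}) ^ κ) ^ #J ≤ (2 ^ κ) ^ κ :=
            power_le_power_left (aleph0_pos.trans_le hinf).ne' hJ
        _ = 2 ^ κ := by rw [← power_mul, mul_eq_self hκ]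
  refine ⟨range eval, ⟨_, mem_range_self (WType.mk none PEmpty.elim)⟩, ?_, ?_⟩
  · refine mk_range_le.trans (WType.cardinalMk_le_of_le ?_)
    calc (Cardinal.sum fun o => ((2 : Cardinal.{u}) ^ κ) ^ #(β o))
        ≤ Cardinal.sum fun _ : Option T => (2 : Cardinal.{u}) ^ κ := sum_le_sum _ _ hpow
      _ = #(Option T) * 2 ^ κ := by simp
      _ ≤ 2 ^ κ * 2 ^ κ := by
          gcongr
          rw [mk_option]
          exact add_le_of_le hinf hT (one_le_aleph0.trans hinf)
      _ = 2 ^ κ := mul_eq_self hinf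
  · intro t g hg
    choose w hw using hg
    refine ⟨WType.mk (some t) w, ?_⟩
    change F t (fun j => eval (w j)) = F t g
    simp only [hw]

section GcKappa

variable {κ : Cardinal.{u}} {X : Type u} [TopologicalSpace X]

theorem InitiallyCompact.exists_finset {ι : Type u} (hX : InitiallyCompact κ X) (hι : #ι ≤ κ)
    {U : ι → Set X} (hU : ∀ i, IsOpen (U i)) (hcov : ⋃ i, U i = Set.univ) :
    ∃ s : Finset ι, ⋃ i ∈ s, U i = Set.univ := by
  obtain ⟨𝒱, h𝒱, hfin, hcov'⟩ := hX (range U) (forall_mem_range.2 hU)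
    (by rwa [sUnion_range]) (mk_range_le.trans hι)
  rw [← image_univ] at h𝒱
  obtain ⟨s, -, hs, rfl⟩ := exists_subset_image_finite_and.1 ⟨𝒱, h𝒱, hfin, rfl⟩
  exact ⟨hs.toFinset, by simpa using hcov'⟩

/-- A closed subset covered by a monotone family of open sets indexed by the finite subsets of a
set of size at most `κ` is contained in a member of this family. -/
theorem InitiallyCompact.exists_subset_of_monotone {K : Type u} (hκ : ℵ₀ ≤ κ)
    (hX : InitiallyCompact κ X) (hK : #K = κ) {F : Set X} (hF : IsClosed F)
    {P : Finset K → Set X} (hP : ∀ f, IsOpen (P f)) (hmono : Monotone P)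
    (hcov : F ⊆ ⋃ f, P f) : ∃ f, F ⊆ P f := by
  classical
  have : Infinite K := infinite_iff.2 (hK ▸ hκ)
  obtain ⟨s, hs⟩ := hX.exists_finset (U := fun f => P f ∪ Fᶜ)
    (by rw [mk_finset_of_infinite, hK]) (fun f => (hP f).union hF.isOpen_compl) (by
      refine eq_univ_of_forall fun x => ?_
      by_cases hx : x ∈ F
      · obtain ⟨f, hf⟩ := mem_iUnion.1 (hcov hx)
        exact mem_iUnion.2 ⟨f, Or.inl hf⟩
      · exact mem_iUnion.2 ⟨∅, Or.inr hx⟩)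
  refine ⟨s.sup id, fun x hx => ?_⟩
  obtain ⟨f, hf, hxf⟩ := mem_iUnion₂.1 (hs ▸ mem_univ x : x ∈ ⋃ f ∈ s, P f ∪ Fᶜ)
  exact hmono (Finset.le_sup (f := id) hf) (hxf.resolve_right fun h => h hx)

theorem InitiallyCompact.exists_disjoint_biInter {K : Type u} (hX : InitiallyCompact κ X)
    (hK : #K = κ) {U V : K → Set X}
    (h : Disjoint (⋂ k, closure (U k)) (⋂ k, closure (V k))) :
    ∃ f : Finset K, Disjoint (⋂ k ∈ f, U k) (⋂ k ∈ f, V k) := by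
  obtain ⟨f, hf⟩ := hX.exists_finset (U := fun k => (closure (U k) ∩ closure (V k))ᶜ) hK.le
    (fun k => (isClosed_closure.inter isClosed_closure).isOpen_compl) (by
      rw [← compl_iInter, iInter_inter_distrib, h.inter_eq, compl_empty])
  refine ⟨f, Set.disjoint_left.2 fun x hxU hxV => ?_⟩
  obtain ⟨k, hk, hxk⟩ := mem_iUnion₂.1 (hf ▸ mem_univ x :
    x ∈ ⋃ k ∈ f, (closure (U k) ∩ closure (V k))ᶜ)
  exact hxk ⟨subset_closure (mem_iInter₂.1 hxU k hk), subset_closure (mem_iInter₂.1 hxV k hk)⟩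

theorem IsGcKappa.inter (hκ : ℵ₀ ≤ κ) {G H : Set X} (hG : IsGcKappa κ G)
    (hH : IsGcKappa κ H) : IsGcKappa κ (G ∩ H) := by
  obtain ⟨ι, U, hι, hUo, hU, hU'⟩ := hG
  obtain ⟨ι', V, hι', hVo, hV, hV'⟩ := hH
  refine ⟨ι ⊕ ι', Sum.elim U V, ?_, ?_, ?_, ?_⟩
  · simpa using add_le_of_le hκ hι hι'
  · rintro (i | i)
    exacts [hUo i, hVo i]
  · simp only [iInter_sum, Sum.elim_inl, Sum.elim_inr, ← hU, ← hV]
  · simp only [iInter_sum, Sum.elim_inl, Sum.elim_inr, ← hU', ← hV']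

theorem isGcKappa_univ : IsGcKappa κ (Set.univ : Set X) :=
  ⟨PEmpty, PEmpty.elim, by simp, fun i => i.elim, by simp, by simp⟩

theorem isTopologicalBasis_isGcKappa (hκ : ℵ₀ ≤ κ) :
    @IsTopologicalBasis X (generateFrom {s : Set X | IsGcKappa κ s})
      {s : Set X | IsGcKappa κ s} :=
  @isTopologicalBasis_of_subbasis_of_finiteInter X (generateFrom _) _ rfl
    ⟨isGcKappa_univ, fun _ hs _ ht => hs.inter hκ ht⟩

/-- A `G^c_κ` set is presented by a family of open sets indexed by any type of size `κ`. -/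
theorem IsGcKappa.exists_family {K : Type u} (hK : #K = κ) {G : Set X} (hG : IsGcKappa κ G) :
    ∃ U : K → Set X, (∀ k, IsOpen (U k)) ∧ G = ⋂ k, U k ∧ G = ⋂ k, closure (U k) := by
  obtain ⟨ι, U, hι, hUo, hU, hU'⟩ := hG
  cases isEmpty_or_nonempty ι
  · exact ⟨fun _ => Set.univ, fun _ => isOpen_univ, by simp [hU], by simp [hU]⟩
  · obtain ⟨e, he⟩ := exists_surjective_of_mk_le (hι.trans hK.ge)
    exact ⟨U ∘ e, fun k => hUo _, hU.trans (he.iInter_comp U).symm,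
      hU'.trans (he.iInter_comp fun i => closure (U i)).symm⟩

/-- A point of the closure of `A` in a `G^c_κ` set `G` belongs to a subset of `G` which is an
intersection of `κ` many closures of subsets of `A` of size at most `κ`. -/
theorem TightnessLE.exists_mem_iInter_closure {K : Type u} (ht : TightnessLE X κ) (hK : #K = κ)
    {A G : Set X} (hG : IsGcKappa κ G) {x : X} (hx : x ∈ closure A) (hxG : x ∈ G) :
    ∃ (g : K → A) (c : K → Set K),
      x ∈ ⋂ i, closure ((fun k => (g k : X)) '' c i) ∧
      ⋂ i, closure ((fun k => (g k : X)) '' c i) ⊆ G := by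
  obtain ⟨U, hUo, hU, hU'⟩ := hG.exists_family hK
  obtain ⟨B, hBA, hB, hxB⟩ := ht A x hx
  have : Nonempty B := (closure_nonempty_iff.1 ⟨x, hxB⟩).to_subtype
  obtain ⟨e, he⟩ := exists_surjective_of_mk_le (hB.trans hK.ge)
  refine ⟨fun k => ⟨e k, hBA (e k).2⟩, fun i => {k | (e k : X) ∈ U i}, ?_, ?_⟩
  · refine mem_iInter.2 fun i => closure_mono ?_
      ((hUo i).inter_closure ⟨mem_iInter.1 (hU ▸ hxG) i, hxB⟩)
    rintro y ⟨hyU, hyB⟩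
    obtain ⟨k, hk⟩ := he ⟨y, hyB⟩
    exact ⟨k, by simpa [hk] using hyU, by simp [hk]⟩
  · rw [hU']
    exact iInter_mono fun i => closure_mono (image_subset_iff.2 fun k hk => hk)

end GcKappa

/-- Let `X` be an initially `κ`-compact Hausdorff space with tightness at most `κ` and
`wL_c(X) ≤ κ`. Then every cover of `X` by `G^c_κ` sets has a subfamily of size at most
`2^κ` whose union is dense in the topology generated by the `G^c_κ` subsets of `X`. -/
theorem wL_Gc_kappa_le_two_pow
    (κ : Cardinal.{u}) (hκ : ℵ₀ ≤ κ)
    (X : Type u) [TopologicalSpace X] [T2Space X]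
    (hcpt : InitiallyCompact κ X) (ht : TightnessLE X κ) (hwlc : WLcLE X κ)
    (𝒰 : Set (Set X)) (h𝒰 : ∀ u ∈ 𝒰, IsGcKappa κ u) (hcov : ⋃₀ 𝒰 = Set.univ) :
    ∃ 𝒱 ⊆ 𝒰, #𝒱 ≤ 2 ^ κ ∧
      @Dense X (TopologicalSpace.generateFrom {s : Set X | IsGcKappa κ s}) (⋃₀ 𝒱) := by
  rcases isEmpty_or_nonempty X with hX | ⟨⟨x₀⟩⟩
  · exact ⟨∅, empty_subset _, by simp, fun x => isEmptyElim x⟩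
  obtain ⟨K, hK⟩ : ∃ K : Type u, #K = κ := ⟨κ.out, mk_out κ⟩
  have : Infinite K := infinite_iff.2 (hK ▸ hκ)
  have htwo : ((2 : Cardinal.{u}) ^ κ) ^ κ = 2 ^ κ := by rw [← power_mul, mul_eq_self hκ]
  have hinf : ℵ₀ ≤ (2 : Cardinal.{u}) ^ κ := hκ.trans (cantor κ).le
  obtain ⟨U₀, hU₀, -⟩ := mem_sUnion.1 (hcov ▸ mem_univ x₀ : x₀ ∈ ⋃₀ 𝒰)
  have hex : ∀ B : Set X, ∃ U ∈ 𝒰, (∃ U' ∈ 𝒰, B ⊆ U') → B ⊆ U := fun B => by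
    by_cases h : ∃ U' ∈ 𝒰, B ⊆ U'
    · obtain ⟨U, hU, hB⟩ := h
      exact ⟨U, hU, fun _ => hB⟩
    · exact ⟨U₀, hU₀, fun h' => absurd h' h⟩
  choose φ hφ𝒰 hφ using hex
  choose O hOo hO hO' using fun B => (h𝒰 (φ B) (hφ𝒰 B)).exists_family hK
  have hex' : ∀ P : Set X, ∃ x, closure P ≠ Set.univ → x ∉ closure P := fun P => by
    by_cases h : closure P = Set.univ
    · exact ⟨x₀, fun h' => absurd h h'⟩
    · exact ((ne_univ_iff_exists_notMem _).1 h).imp fun x hx _ => hx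
  choose ψ hψ using hex'
  let B : (K → X) → (K → Set K) → Set X := fun g c => ⋂ i, closure (g '' c i)
  let W : (K → X) → (K → Set K) → Finset K → Set X := fun g c f => ⋂ k ∈ f, O (B g c) k
  have hWo : ∀ g c f, IsOpen (W g c f) := fun g c f => isOpen_biInter_finset fun k _ => hOo _ k
  obtain ⟨A, ⟨a₀, ha₀⟩, hAcard, hA⟩ := exists_nonempty_closed_under hκ
    (T := K → (K → Set K) × Finset K) (J := K × K) (by
      simp only [mk_pi, mk_prod, mk_set, mk_finset_of_infinite, hK, prod_const, lift_id, htwo]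
      rw [mul_eq_left hinf (cantor κ).le (aleph0_pos.trans_le hκ).ne', htwo])
    (by simp [hK, mul_eq_self hκ]) x₀
    fun t g => ψ (⋃ k, W (fun j => g (k, j)) (t k).1 (t k).2)
  let 𝒱 : Set (Set X) := range fun p : (K → A) × (K → Set K) => φ (B (fun k => p.1 k) p.2)
  refine ⟨𝒱, range_subset_iff.2 fun _ => hφ𝒰 _, mk_range_le.trans ?_,
    (@IsTopologicalBasis.dense_iff X (generateFrom _) _ (isTopologicalBasis_isGcKappa hκ) _).2 ?_⟩
  · simp only [mk_prod, mk_pi, mk_set, hK, prod_const, lift_id, htwo]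
    refine (mul_le_mul' (power_le_power_right hAcard) le_rfl).trans ?_
    rw [htwo, mul_eq_self hinf]
  rintro G hG ⟨p, hp⟩
  by_contra hdisj
  rw [not_nonempty_iff_eq_empty, ← disjoint_iff_inter_eq_empty] at hdisj
  obtain ⟨V, hVo, hV, hV'⟩ := IsGcKappa.exists_family hK hG
  let 𝒪 : Finset K → Set (Set X) := fun f =>
    {S | ∃ (g : K → A) (c : K → Set K) (f' : Finset K), S = W (fun k => g k) c f' ∧
      Disjoint S (⋂ k ∈ f, V k)}
  have h𝒪o : ∀ f, ∀ S ∈ 𝒪 f, IsOpen S := by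
    rintro f _ ⟨g, c, f', rfl, -⟩
    exact hWo _ _ _
  have h𝒪cov : closure A ⊆ ⋃ f, ⋃₀ 𝒪 f := by
    intro x hx
    obtain ⟨U, hU, hxU⟩ := mem_sUnion.1 (hcov ▸ mem_univ x : x ∈ ⋃₀ 𝒰)
    obtain ⟨g, c, hxB, hBU⟩ := ht.exists_mem_iInter_closure hK (h𝒰 U hU) hx hxU
    have hxφ : x ∈ φ (B (fun k => g k) c) := hφ _ ⟨U, hU, hBU⟩ hxB
    have hd : Disjoint (φ (B (fun k => g k) c)) G :=
      (hdisj.mono_right (subset_sUnion_of_mem (mem_range_self (g, c)))).symm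
    rw [hO' (B _ _), hV'] at hd
    obtain ⟨f, hf⟩ := hcpt.exists_disjoint_biInter hK hd
    rw [hO] at hxφ
    exact mem_iUnion.2 ⟨f, W (fun k => g k) c f, ⟨g, c, f, rfl, hf⟩,
      mem_iInter₂.2 fun k _ => mem_iInter.1 hxφ k⟩
  obtain ⟨f, hf⟩ := hcpt.exists_subset_of_monotone hκ hK isClosed_closure
    (fun f => isOpen_sUnion (h𝒪o f)) (fun f₁ f₂ hle => sUnion_mono (by
      rintro S ⟨g, c, f', hS, hd⟩
      exact ⟨g, c, f', hS, hd.mono_right (biInter_mono hle fun _ _ => subset_rfl)⟩)) h𝒪cov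
  obtain ⟨𝒲, h𝒲, h𝒲card, hA𝒲⟩ := hwlc (closure A) isClosed_closure (𝒪 f) (h𝒪o f) hf
  have : Nonempty 𝒲 := by
    obtain ⟨_, S, hS, -⟩ := closure_nonempty_iff.1 ⟨a₀, hA𝒲 (subset_closure ha₀)⟩
    exact ⟨⟨S, hS⟩⟩
  obtain ⟨e, he⟩ := exists_surjective_of_mk_le (h𝒲card.trans hK.ge)
  choose g c f' hgW hd using fun k => h𝒲 (e k).2
  have hunion : ⋃ k, W (fun j => g k j) (c k) (f' k) = ⋃₀ 𝒲 := by
    simp only [← hgW, he.iUnion_comp (fun S : 𝒲 => (S : Set X)), sUnion_eq_iUnion]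
  have hdense : closure (⋃₀ 𝒲) = Set.univ := by
    by_contra hne
    refine hψ _ hne (hA𝒲 (subset_closure ?_))
    rw [← hunion]
    exact hA (fun k => (c k, f' k)) (fun q => g q.1 q.2) fun q => (g q.1 q.2).2
  have hpV : p ∈ ⋂ k ∈ f, V k := mem_iInter₂.2 fun k _ => mem_iInter.1 (hV ▸ hp) k
  obtain ⟨y, hyV, S, hS, hyS⟩ := mem_closure_iff.1 (hdense ▸ mem_univ p : p ∈ closure (⋃₀ 𝒲))
    _ (isOpen_biInter_finset fun k _ => hVo k) hpV
  obtain ⟨_, _, _, _, hSd⟩ := h𝒲 hS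
  exact Set.disjoint_left.1 hSd hyS hyV
end

section
/- Let X be a topological space with Lindelöf degree L(X) ≤ κ admitting a base of multiplicity at most 2^κ (every point belongs to at most 2^κ base elements). Then every cover of X by G_κ sets has a subcover of cardinality at most 2^κ; that is, L(X_κ) ≤ 2^κ. -/
open Set Cardinal TopologicalSpace

universe u

/-- `G` is a `G_κ` set: an intersection of at most `κ` many open sets. -/
def IsGKappa (κ : Cardinal.{u}) {X : Type u} [TopologicalSpace X] (G : Set X) : Prop :=
  ∃ (ι : Type u) (U : ι → Set X), #ι ≤ κ ∧ (∀ i, IsOpen (U i)) ∧ G = ⋂ i, U i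

/-- In a family of sets of multiplicity at most `2^κ`, there is a set `Y` of at most `2^κ` points
such that any `κ` many members of the family that all meet `Y` cover the whole space as soon as
they cover `Y`. -/
theorem exists_set_card_le_forall_sUnion_eq_univ {κ : Cardinal.{u}} (hκ : ℵ₀ ≤ κ) {X : Type u}
    (B : Set (Set X)) (hmult : ∀ x : X, #{b ∈ B | x ∈ b} ≤ 2 ^ κ) :
    ∃ Y : Set X, #Y ≤ 2 ^ κ ∧ ∀ W ⊆ B, #W ≤ κ → (∀ b ∈ W, (b ∩ Y).Nonempty) →
      Y ⊆ ⋃₀ W → ⋃₀ W = Set.univ := by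
  classical
  rcases isEmpty_or_nonempty X with hX | hX
  · exact ⟨∅, by simp, fun W _ _ _ _ => Subsingleton.elim _ _⟩
  have hpow : ((2 : Cardinal.{u}) ^ κ) ^ κ = 2 ^ κ := by
    rw [← power_mul, mul_eq_self hκ]
  have hinf : ℵ₀ ≤ (2 : Cardinal.{u}) ^ κ := hκ.trans (cantor κ).le
  -- `e x` enumerates the members of the family containing `x`
  have hemb : ∀ x : X, Nonempty ({b | b ∈ B ∧ x ∈ b} ↪ Set κ.out) := fun x => by
    rw [← Cardinal.le_def, mk_set, mk_out]
    exact hmult x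
  let e : X → Set κ.out → Set X := fun x =>
    Function.extend (hemb x).some Subtype.val (fun _ => ∅)
  have he : ∀ (x : X), ∀ b ∈ B, x ∈ b → ∃ s, e x s = b := fun x b hb hx =>
    ⟨(hemb x).some ⟨b, hb, hx⟩, (hemb x).some.injective.extend_apply _ _ _⟩
  let c : Set X → X := fun V => if h : ∃ x, x ∉ V then h.choose else hX.some
  have hc : ∀ V : Set X, V ≠ Set.univ → c V ∉ V := fun V hV => by
    have h : ∃ x, x ∉ V := (Set.ne_univ_iff_exists_notMem V).1 hV
    simp only [c, dif_pos h]
    exact h.choose_spec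
  -- well-founded trees coding the points obtained by iterating the choice function `c`
  let α : Type u := Set κ.out × (κ.out → Set κ.out)
  let β : α → Type u := fun a => a.1
  let eval : WType β → X := WType.elim X fun t : Σ a : α, β a → X =>
    c (⋃ k : β t.1, e (t.2 k) (t.1.2 k.1))
  refine ⟨Set.range eval, mk_range_le.trans (WType.cardinalMk_le_of_le' ?_), ?_⟩
  · have hβ : ∀ a : α, ((2 : Cardinal.{u}) ^ κ) ^ #(β a) ≤ 2 ^ κ := fun a => by
      conv_rhs => rw [← hpow]
      refine power_le_power_left (power_ne_zero _ two_ne_zero) ?_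
      exact (mk_set_le a.1).trans (mk_out κ).le
    simp only [lift_id]
    refine (sum_le_sum _ _ hβ).trans ?_
    simp only [sum_const, lift_id]
    have hα : #α = 2 ^ κ := by
      simp only [α, mk_prod, lift_id, mk_set, mk_out, mk_pi, prod_const]
      rw [hpow, mul_eq_self hinf]
    rw [hα, mul_eq_self hinf]
  · intro W hWB hW hmeet hcov
    by_contra hne
    obtain ⟨j⟩ : Nonempty (W ↪ κ.out) := by
      rw [← Cardinal.le_def, mk_out]
      exact hW
    have hmeet' : ∀ b : W, ∃ (t : WType β) (s : Set κ.out), e (eval t) s = b := fun b => by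
      obtain ⟨_, hxb, t, rfl⟩ := hmeet b b.2
      exact ⟨t, he _ b (hWB b.2) hxb⟩
    choose t s hts using hmeet'
    let a : α := (Set.range j, Function.extend j s fun _ => ∅)
    let T : WType β := WType.mk a fun k => t (Set.mem_range.1 k.2).choose
    have hT : eval T = c (⋃₀ W) := by
      change c (⋃ k : Set.range j, e (eval (t (Set.mem_range.1 k.2).choose))
        (Function.extend j s (fun _ => ∅) k.1)) = _
      congr 1
      have hk : ∀ k : Set.range j, e (eval (t (Set.mem_range.1 k.2).choose))
          (Function.extend j s (fun _ => ∅) k.1) = (Set.mem_range.1 k.2).choose := fun k => by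
        have hs := j.injective.extend_apply s (fun _ => ∅) (Set.mem_range.1 k.2).choose
        rw [(Set.mem_range.1 k.2).choose_spec] at hs
        rw [hs, hts]
      rw [Set.iUnion_congr hk, Set.sUnion_eq_iUnion]
      refine Set.Subset.antisymm (Set.iUnion_subset fun k => Set.subset_iUnion _ _)
        (Set.iUnion_subset fun b => ?_)
      have hb : (Set.mem_range.1 (Set.mem_range_self (f := j) b)).choose = b :=
        j.injective (Set.mem_range.1 (Set.mem_range_self (f := j) b)).choose_spec
      refine Set.subset_iUnion_of_subset ⟨j b, b, rfl⟩ ?_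
      exact (congrArg Subtype.val hb).ge
    exact hc _ hne (hT ▸ hcov (Set.mem_range_self T))

/-- Let `X` be a space with Lindelöf degree at most `κ` admitting a base of multiplicity at
most `2^κ` (every point belongs to at most `2^κ` base elements). Then every cover of `X` by
`G_κ` sets has a subcover of cardinality at most `2^κ`, i.e. `L(X_κ) ≤ 2^κ`. -/
theorem lindelof_G_kappa_of_base_multiplicity
    (κ : Cardinal.{u}) (hκ : ℵ₀ ≤ κ)
    (X : Type u) [TopologicalSpace X]
    (hL : ∀ 𝒰 : Set (Set X), (∀ u ∈ 𝒰, IsOpen u) → ⋃₀ 𝒰 = Set.univ →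
      ∃ 𝒱 ⊆ 𝒰, #𝒱 ≤ κ ∧ ⋃₀ 𝒱 = Set.univ)
    (B : Set (Set X)) (hB : IsTopologicalBasis B)
    (hmult : ∀ x : X, #{b ∈ B | x ∈ b} ≤ 2 ^ κ)
    (𝒰 : Set (Set X)) (h𝒰 : ∀ u ∈ 𝒰, IsGKappa κ u) (hcov : ⋃₀ 𝒰 = Set.univ) :
    ∃ 𝒱 ⊆ 𝒰, #𝒱 ≤ 2 ^ κ ∧ ⋃₀ 𝒱 = Set.univ := by
  obtain ⟨Y, hY, hYcov⟩ := exists_set_card_le_forall_sUnion_eq_univ hκ B hmult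
  have hpow : ((2 : Cardinal.{u}) ^ κ) ^ κ = 2 ^ κ := by
    rw [← power_mul, mul_eq_self hκ]
  have hinf : ℵ₀ ≤ (2 : Cardinal.{u}) ^ κ := hκ.trans (cantor κ).le
  let BY : Set (Set X) := ⋃ y : Y, {b | b ∈ B ∧ (y : X) ∈ b}
  have hBY : #BY ≤ 2 ^ κ := by
    refine (mk_iUnion_le_sum_mk).trans ((sum_le_sum _ _ fun y : Y => hmult y).trans ?_)
    simp only [sum_const, lift_id]
    exact (mul_le_mul_left hY _).trans (mul_eq_self hinf).le
  have hmem : ∀ z ∈ closure Y, ∀ b ∈ B, z ∈ b → b ∈ BY := fun z hz b hb hzb => by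
    obtain ⟨y, hyb, hy⟩ := mem_closure_iff.1 hz b (hB.isOpen hb) hzb
    exact Set.mem_iUnion.2 ⟨⟨y, hy⟩, hb, hyb⟩
  let small : Type u := {F : Set (Set X) // F ⊆ BY ∧ #F ≤ κ}
  have hsmall : #small ≤ 2 ^ κ :=
    (mk_bounded_subset_le BY κ).trans <| (power_le_power_right (max_le hBY hinf)).trans hpow.le
  let good : Set small := {F | ∃ U ∈ 𝒰, ⋂₀ F.1 ⊆ U}
  let g : good → Set X := fun F => F.2.choose
  have hg : ∀ F : good, g F ∈ 𝒰 ∧ ⋂₀ F.1.1 ⊆ g F := fun F => F.2.choose_spec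
  refine ⟨Set.range g, Set.range_subset_iff.2 fun F => (hg F).1,
    mk_range_le.trans ((mk_set_le good).trans hsmall), Set.eq_univ_of_forall fun p => ?_⟩
  by_contra hp
  have hsep : ∀ z ∈ closure Y, ∃ b ∈ BY, z ∈ b ∧ p ∉ b := fun z hz => by
    obtain ⟨U, hU, hzU⟩ : z ∈ ⋃₀ 𝒰 := hcov ▸ Set.mem_univ z
    obtain ⟨ι, O, hι, hO, hUO⟩ := h𝒰 U hU
    have hb : ∀ i, ∃ b ∈ B, z ∈ b ∧ b ⊆ O i := fun i =>
      hB.exists_subset_of_mem_open (Set.mem_iInter.1 (hUO ▸ hzU) i) (hO i)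
    choose b hbB hzb hbO using hb
    have hF : Set.range b ⊆ BY ∧ #(Set.range b) ≤ κ :=
      ⟨Set.range_subset_iff.2 fun i => hmem z hz _ (hbB i) (hzb i), mk_range_le.trans hι⟩
    have hgood : (⟨Set.range b, hF⟩ : small) ∈ good := by
      refine ⟨U, hU, ?_⟩
      rw [hUO, Set.sInter_range]
      exact Set.iInter_mono hbO
    by_contra! hcon
    refine hp ⟨_, Set.mem_range_self (⟨_, hgood⟩ : good), (hg _).2 ?_⟩
    rintro _ ⟨i, rfl⟩
    exact hcon _ (hF.1 (Set.mem_range_self i)) (hzb i)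
  have hBYB : BY ⊆ B := Set.iUnion_subset fun y b hb => hb.1
  obtain ⟨𝒱, h𝒱, hcard, h𝒱cov⟩ := hL (insert (closure Y)ᶜ {b | b ∈ BY ∧ p ∉ b})
    (by
      rintro u (rfl | hu)
      · exact isClosed_closure.isOpen_compl
      · exact hB.isOpen (hBYB hu.1))
    (by
      refine Set.eq_univ_of_forall fun z => ?_
      by_cases hz : z ∈ closure Y
      · obtain ⟨b, hb, hzb, hpb⟩ := hsep z hz
        exact ⟨b, Or.inr ⟨hb, hpb⟩, hzb⟩
      · exact ⟨_, Or.inl rfl, hz⟩)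
  have hW := hYcov (𝒱 ∩ {b | b ∈ BY ∧ p ∉ b}) (fun b hb => hBYB hb.2.1)
    ((mk_le_mk_of_subset Set.inter_subset_left).trans hcard)
    (fun b hb => by
      obtain ⟨y, hy⟩ := Set.mem_iUnion.1 hb.2.1
      exact ⟨y, hy.2, y.2⟩)
    (fun y hy => by
      obtain ⟨u, hu, hyu⟩ : y ∈ ⋃₀ 𝒱 := h𝒱cov ▸ Set.mem_univ y
      rcases h𝒱 hu with rfl | hu'
      · exact absurd (subset_closure hy) hyu
      · exact ⟨u, ⟨hu, hu'⟩, hyu⟩)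
  obtain ⟨b, hb, hpb⟩ : p ∈ ⋃₀ (𝒱 ∩ {b | b ∈ BY ∧ p ∉ b}) := hW ▸ Set.mem_univ p
  exact hb.2.2 hpb
end

section
/- Let κ be a cardinal of uncountable cofinality and X = {α < κ : cf(α) ≤ ω} with the topology inherited from the order topology on κ. Then X is first-countable (hence has countable tightness) and countably compact, and X contains a free sequence of cardinality κ, namely the increasing enumeration of the successor ordinals below κ; hence F(X) = κ. -/
open Set Cardinal TopologicalSpace

universe u v w

/-- `Y` is countably compact: every countable open cover has a finite subcover. -/
def CountablyCompact (Y : Type v) [TopologicalSpace Y] : Prop :=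
  ∀ 𝒰 : Set (Set Y), 𝒰.Countable → (∀ u ∈ 𝒰, IsOpen u) → ⋃₀ 𝒰 = Set.univ →
    ∃ 𝒱 ⊆ 𝒰, 𝒱.Finite ∧ ⋃₀ 𝒱 = Set.univ

/-- A free sequence in `Y` indexed by a well-ordered type `ι`. -/
def IsFreeSequence (Y : Type v) [TopologicalSpace Y] (ι : Type w) [LinearOrder ι]
    (x : ι → Y) : Prop :=
  ∀ j : ι, Disjoint (closure (x '' {i | i < j})) (closure (x '' {i | j ≤ i}))

open Order Topology Filter in
theorem Ordinal.isCountablyGenerated_nhds_of_cof_le_aleph0 {a : Ordinal.{u}} (ha : a.cof ≤ ℵ₀) :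
    (𝓝 a).IsCountablyGenerated := by
  rcases eq_or_ne a 0 with rfl | h0
  · rw [SuccOrder.nhds_eq_pure.2 fun h : IsSuccLimit (0 : Ordinal) => h.not_isMin isMin_bot]
    infer_instance
  obtain ⟨s, hs, hsc⟩ := Order.exists_cof_eq a.ToType
  have hcount : s.Countable := by
    rw [← Cardinal.le_aleph0_iff_set_countable, hsc, Ordinal.cof_toType]
    exact ha
  let t : Set Ordinal.{u} := (fun i : a.ToType => (Ordinal.ToType.mk.symm i : Ordinal)) '' s
  have hlt : ∀ b ∈ t, b < a := by
    rintro _ ⟨i, -, rfl⟩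
    exact (Ordinal.ToType.mk.symm i).2
  have hbasis : (𝓝 a).HasBasis (· ∈ t) (Set.Ioc · a) := by
    refine (SuccOrder.hasBasis_nhds_Ioc_of_exists_lt ⟨0, pos_iff_ne_zero.2 h0⟩).to_hasBasis ?_
      fun b hb => ⟨b, hlt b hb, Subset.rfl⟩
    intro b hb
    obtain ⟨i, hi, hbi⟩ := hs (Ordinal.ToType.mk ⟨b, hb⟩)
    refine ⟨_, ⟨i, hi, rfl⟩, Set.Ioc_subset_Ioc_left ?_⟩
    exact Subtype.coe_le_coe.2 (Ordinal.ToType.mk.le_symm_apply.2 hbi)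
  exact HasCountableBasis.isCountablyGenerated ⟨hbasis, hcount.image _⟩

theorem Ordinal.iSup_lt_of_countable {ι : Type v} [Countable ι] {f : ι → Ordinal.{u}}
    {a : Ordinal.{u}} (ha : ℵ₀ < a.cof) (hf : ∀ i, f i < a) : ⨆ i, f i < a := by
  refine Ordinal.lift_iSup_lt_of_lt_cof (lt_of_le_of_lt (b := ℵ₀) ?_ ?_) hf
  · simp
  · rw [← Ordinal.lift_cof]
    exact Cardinal.aleph0_lt_lift.2 ha

/-- A sequence of ordinals bounded below an ordinal of uncountable cofinality accumulates at
an ordinal of countable cofinality. -/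
theorem Ordinal.exists_infinite_setOf_mem_Ioc {c : Ordinal.{u}} (hc : ℵ₀ < c.cof)
    (x : ℕ → Ordinal.{u}) (hx : ∀ n, x n < c) (hxc : ∀ n, (x n).cof ≤ ℵ₀) :
    ∃ p < c, p.cof ≤ ℵ₀ ∧ {n | x n ≤ p}.Infinite ∧ ∀ b < p, {n | x n ∈ Ioc b p}.Infinite := by
  have hsup : {n | x n ≤ ⨆ n, x n}.Infinite := by
    have : {n | x n ≤ ⨆ n, x n} = Set.univ := eq_univ_of_forall fun n => Ordinal.le_iSup x n
    exact this ▸ infinite_univ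
  obtain ⟨p, hp, hmin⟩ := wellFounded_lt.has_min {p | {n | x n ≤ p}.Infinite} ⟨_, hsup⟩
  have hfin : ∀ b < p, {n | x n ≤ b}.Finite := fun b hb => by
    by_contra h
    exact hmin b h hb
  refine ⟨p, (not_lt.1 (hmin _ hsup)).trans_lt (iSup_lt_of_countable hc hx), ?_, hp, ?_⟩
  · by_cases hmem : ∃ n, x n = p
    · obtain ⟨n, rfl⟩ := hmem
      exact hxc n
    by_contra! hpc
    have hlt : ⨆ n : {n | x n ≤ p}, x n < p :=
      iSup_lt_of_countable hpc fun n => lt_of_le_of_ne n.2 fun h => hmem ⟨n, h⟩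
    exact hp ((hfin _ hlt).subset fun n hn =>
      Ordinal.le_iSup (fun n : {n | x n ≤ p} => x n) ⟨n, hn⟩)
  · intro b hb
    refine (hp.sdiff (hfin b hb)).mono fun n hn => ⟨not_le.1 hn.2, hn.1⟩

open Topology in
theorem countablyCompact_of_exists_clusterPt {Y : Type v} [TopologicalSpace Y]
    (h : ∀ x : ℕ → Y, ∃ p, ∀ s ∈ 𝓝 p, {n | x n ∈ s}.Infinite) : CountablyCompact Y := by
  intro 𝒰 hc ho hU
  rcases 𝒰.eq_empty_or_nonempty with rfl | hne
  · exact ⟨∅, Subset.rfl, finite_empty, hU⟩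
  obtain ⟨U, rfl⟩ := hc.exists_eq_range hne
  by_contra! hcon
  have hex : ∀ n : ℕ, ∃ y, ∀ m ≤ n, y ∉ U m := fun n => by
    have := hcon (U '' Iic n) (image_subset_range _ _) ((finite_Iic n).image U)
    obtain ⟨y, hy⟩ := (ne_univ_iff_exists_notMem _).1 this
    exact ⟨y, fun m hm hmem => hy ⟨_, ⟨m, hm, rfl⟩, hmem⟩⟩
  choose x hx using hex
  obtain ⟨p, hp⟩ := h x
  obtain ⟨_, ⟨m, rfl⟩, hpm⟩ := hU.symm ▸ mem_univ p
  obtain ⟨n, hn, hmn⟩ := (hp _ ((ho _ ⟨m, rfl⟩).mem_nhds hpm)).exists_gt m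
  exact hx n m hmn.le hn

theorem IsFreeSequence.injective {Y : Type v} [TopologicalSpace Y] {ι : Type w} [LinearOrder ι]
    {x : ι → Y} (hx : IsFreeSequence Y ι x) : Function.Injective x :=
  Function.Injective.of_lt_imp_ne fun i j hij h =>
    (hx j).le_bot ⟨subset_closure ⟨i, hij, rfl⟩, subset_closure ⟨j, le_rfl, h.symm⟩⟩

/-- Successors of the values of a strictly monotone family of ordinals form a free sequence. -/
theorem isFreeSequence_of_coe_eq_succ {X : Set Ordinal.{u}} {ι : Type w} [LinearOrder ι]
    {f : ι → Ordinal.{u}} (hf : StrictMono f) {x : ι → X}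
    (hx : ∀ i, (x i : Ordinal) = Order.succ (f i)) : IsFreeSequence X ι x := by
  intro j
  have hle : closure (x '' {i | i < j}) ⊆ Subtype.val ⁻¹' Iic (f j) := by
    refine closure_minimal ?_ (isClosed_Iic.preimage continuous_subtype_val)
    rintro _ ⟨i, hi, rfl⟩
    simpa [hx] using hf hi
  have hge : closure (x '' {i | j ≤ i}) ⊆ Subtype.val ⁻¹' Ici (Order.succ (f j)) := by
    refine closure_minimal ?_ (isClosed_Ici.preimage continuous_subtype_val)
    rintro _ ⟨i, hi, rfl⟩
    simpa [hx] using hf.monotone hi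
  refine Set.disjoint_left.2 fun y hy hy' => ?_
  exact ((Order.lt_succ (f j)).trans_le (hge hy')).not_ge (hle hy)

/-- Let `κ` be a cardinal of uncountable cofinality and
`X = {α < κ : cf(α) ≤ ω}` with the topology inherited from the order topology on the
ordinals below `κ`. Then `X` is first countable (hence of countable tightness), countably
compact, and contains a free sequence of cardinality `κ` while every free sequence in `X`
has cardinality at most `κ`; hence `F(X) = κ`. -/
theorem free_sequence_in_countable_cofinality_ordinals
    (κ : Cardinal.{u}) (hcf : ℵ₀ < κ.ord.cof)
    (X : Set Ordinal.{u}) (hX : X = {α | α < κ.ord ∧ α.cof ≤ ℵ₀}) :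
    FirstCountableTopology ↥X ∧
    CountablyCompact ↥X ∧
    (∃ (ι : Type u) (_ : LinearOrder ι) (x : ι → ↥X),
      (∀ i j : ι, i < j ∨ i = j ∨ j < i) ∧ WellFoundedLT ι ∧
      IsFreeSequence ↥X ι x ∧ #ι = κ) ∧
    (∀ (ι : Type (u + 1)) [LinearOrder ι], WellFoundedLT ι →
      ∀ x : ι → ↥X, IsFreeSequence ↥X ι x → #ι ≤ Cardinal.lift.{u + 1} κ) := by
  subst hX
  have hκ : ℵ₀ ≤ κ := hcf.le.trans (Ordinal.cof_ord_le κ)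
  refine ⟨⟨fun a => ?_⟩, countablyCompact_of_exists_clusterPt fun x => ?_, ?_, ?_⟩
  · have := Ordinal.isCountablyGenerated_nhds_of_cof_le_aleph0 a.2.2
    rw [nhds_subtype]
    infer_instance
  · obtain ⟨p, hp, hpc, hle, hIoc⟩ := Ordinal.exists_infinite_setOf_mem_Ioc hcf
      (fun n => (x n : Ordinal)) (fun n => (x n).2.1) (fun n => (x n).2.2)
    refine ⟨⟨p, hp, hpc⟩, fun s hs => ?_⟩
    rw [nhds_subtype] at hs
    obtain ⟨t, ht, hts⟩ := hs
    rcases eq_or_ne p 0 with rfl | h0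
    · refine hle.mono fun n hn => hts ?_
      have hn0 : (x n : Ordinal) = 0 := le_bot_iff.1 hn
      simpa [hn0] using mem_of_mem_nhds ht
    · obtain ⟨b, hb, hbt⟩ := exists_Ioc_subset_of_mem_nhds ht ⟨0, pos_iff_ne_zero.2 h0⟩
      exact (hIoc b hb).mono fun n hn => hts (hbt hn)
  · have hlim := Cardinal.isSuccLimit_ord hκ
    refine ⟨κ.ord.ToType, inferInstance,
      fun i => ⟨Order.succ (Ordinal.ToType.mk.symm i : Ordinal),
        hlim.succ_lt (Ordinal.ToType.mk.symm i).2, ?_⟩,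
      lt_trichotomy, inferInstance, ?_, by simp⟩
    · exact (Ordinal.cof_eq_one_iff.2 ⟨_, rfl⟩).trans_le one_le_aleph0
    · refine isFreeSequence_of_coe_eq_succ
        (f := fun i : κ.ord.ToType => (Ordinal.ToType.mk.symm i : Ordinal)) ?_ fun i => rfl
      exact fun i j hij => Ordinal.ToType.mk.symm.strictMono hij
  · intro ι _ _ x hx
    calc #ι ≤ #_ := mk_le_of_injective hx.injective
      _ ≤ #(Iio κ.ord) := mk_le_mk_of_subset fun a ha => ha.1
      _ = Cardinal.lift.{u + 1} κ := by rw [mk_Iio_ordinal, card_ord]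
end
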